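/- Under the stated hypotheses on G, the eigenvector x satisfies x_k > x_{n−1}. -/

import Mathlib

open Matrix

/-- The signless Laplacian `Q(G) = D(G) + A(G)` of a finite simple graph `G`. -/
noncomputable def signlessLaplacian {V : Type*} [Fintype V] (G : SimpleGraph V) :
    Matrix V V ℝ :=
  letI := Classical.decEq V
  letI : DecidableRel G.Adj := Classical.decRel _
  Matrix.diagonal (fun v => (G.degree v : ℝ)) + G.adjMatrix ℝ

/-- The `Q`-index of `G`: the largest eigenvalue of the signless Laplacian `Q(G)`. -/
noncomputable def qIndex {V : Type*} [Fintype V] (G : SimpleGraph V) : ℝ :=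
  letI := Classical.decEq V
  sSup (spectrum ℝ (signlessLaplacian G))

/-!
Put `a = v_{n-1}`, `b = v_k`, `z = v_0`, `t = v_3`, `p = v_2`. When the eigenvalue equations at two
vertices are subtracted, the contributions of common neighbours cancel. Outside each other's
neighbourhoods, `a` has only `z` and `b`, while `b` has `a` and `t`; hence `x b ≤ x a` would force
`x a - x b ≤ x z - x t`. In turn `z` has at most `a` outside the neighbourhood of `t`, while `t` has
`b` and `p` outside that of `z`; hence `(q - d(z)) * (x z - x t) < x a - x b`. Since
`q > d(t) ≥ d(z) + 1`, the two bounds contradict each other.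
-/

theorem sum_add_sum_le_sum_add_sum_of_subset_union {ι M : Type*} [DecidableEq ι]
    [AddCommMonoid M] [PartialOrder M] [IsOrderedAddMonoid M] {S T A B : Finset ι} {f : ι → M}
    (hA : S ⊆ T ∪ A) (hB : B ⊆ T \ S) (hf : ∀ i, 0 ≤ f i) :
    ∑ i ∈ S, f i + ∑ i ∈ B, f i ≤ ∑ i ∈ T, f i + ∑ i ∈ A, f i :=
  calc ∑ i ∈ S, f i + ∑ i ∈ B, f i
      = ∑ i ∈ T ∩ S, f i + ∑ i ∈ S \ T, f i + ∑ i ∈ B, f i := by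
        rw [Finset.inter_comm, Finset.sum_inter_add_sum_sdiff]
    _ ≤ ∑ i ∈ T ∩ S, f i + ∑ i ∈ A, f i + ∑ i ∈ T \ S, f i := by
        gcongr
        · exact fun i _ _ => hf i
        · exact sdiff_le_iff.mpr hA
        · exact fun i _ _ => hf i
    _ = ∑ i ∈ T, f i + ∑ i ∈ A, f i := by
        rw [add_right_comm, Finset.sum_inter_add_sum_sdiff]

section SignlessLaplacian

variable {V : Type*} [Fintype V] {G : SimpleGraph V} [DecidableRel G.Adj] {x : V → ℝ} {q : ℝ}
  {u v : V} {A B : Finset V}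

theorem sum_neighborFinset_add_sum_le {M : Type*} [AddCommMonoid M] [PartialOrder M]
    [IsOrderedAddMonoid M] {f : V → M} (hA : G.neighborSet u ⊆ G.neighborSet v ∪ A)
    (hB : (B : Set V) ⊆ G.neighborSet v \ G.neighborSet u) (hf : ∀ w, 0 ≤ f w) :
    ∑ w ∈ G.neighborFinset u, f w + ∑ w ∈ B, f w ≤
      ∑ w ∈ G.neighborFinset v, f w + ∑ w ∈ A, f w := by
  classical
  refine sum_add_sum_le_sum_add_sum_of_subset_union ?_ ?_ hf <;>
    simpa [← Finset.coe_subset]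

theorem degree_add_card_le_degree_add_card (hA : G.neighborSet u ⊆ G.neighborSet v ∪ A)
    (hB : (B : Set V) ⊆ G.neighborSet v \ G.neighborSet u) :
    G.degree u + B.card ≤ G.degree v + A.card := by
  simpa only [Finset.card_eq_sum_ones, ← SimpleGraph.card_neighborFinset_eq_degree] using
    sum_neighborFinset_add_sum_le hA hB fun _ => Nat.zero_le 1

theorem signlessLaplacian_mulVec_apply (x : V → ℝ) (v : V) :
    (signlessLaplacian G *ᵥ x) v = G.degree v * x v + ∑ u ∈ G.neighborFinset v, x u := by
  classical
  have hQ : signlessLaplacian G = diagonal (fun v => (G.degree v : ℝ)) + G.adjMatrix ℝ := by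
    unfold signlessLaplacian
    congr!
  rw [hQ, add_mulVec, Pi.add_apply, mulVec_diagonal, SimpleGraph.adjMatrix_mulVec_apply]

theorem mul_apply_eq_of_signlessLaplacian_mulVec_eq (heig : signlessLaplacian G *ᵥ x = q • x)
    (v : V) : q * x v = G.degree v * x v + ∑ u ∈ G.neighborFinset v, x u := by
  rw [← signlessLaplacian_mulVec_apply, heig, Pi.smul_apply, smul_eq_mul]

theorem degree_lt_of_signlessLaplacian_mulVec_eq (heig : signlessLaplacian G *ᵥ x = q • x)
    (hpos : ∀ w, 0 < x w) (huv : G.Adj u v) : (G.degree u : ℝ) < q := by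
  have hsum : 0 < ∑ w ∈ G.neighborFinset u, x w :=
    Finset.sum_pos (fun w _ => hpos w) ⟨v, (G.mem_neighborFinset u v).mpr huv⟩
  have hu := mul_apply_eq_of_signlessLaplacian_mulVec_eq heig u
  exact lt_of_mul_lt_mul_right (by linarith) (hpos u).le

theorem sub_degree_mul_sub_le_of_signlessLaplacian_mulVec_eq
    (heig : signlessLaplacian G *ᵥ x = q • x) (hx : ∀ w, 0 ≤ x w)
    (hA : G.neighborSet u ⊆ G.neighborSet v ∪ A)
    (hB : (B : Set V) ⊆ G.neighborSet v \ G.neighborSet u) (hcard : A.card ≤ B.card) :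
    (q - G.degree u) * (x u - x v) ≤ ∑ w ∈ A, x w - ∑ w ∈ B, x w := by
  have hdeg : (G.degree u : ℝ) ≤ G.degree v := by
    have hdeg_add := degree_add_card_le_degree_add_card hA hB
    exact_mod_cast (by omega : G.degree u ≤ G.degree v)
  have hsum := sum_neighborFinset_add_sum_le hA hB hx
  have hu := mul_apply_eq_of_signlessLaplacian_mulVec_eq heig u
  have hv := mul_apply_eq_of_signlessLaplacian_mulVec_eq heig v
  linarith [mul_le_mul_of_nonneg_right hdeg (hx v)]

end SignlessLaplacian

theorem stmt_14_general {V : Type*} [Fintype V] (G : SimpleGraph V) {a b z t p : V}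
    (ha : G.neighborSet a ⊆ G.neighborSet b ∪ {z, b})
    (hb : {t, a} ⊆ G.neighborSet b \ G.neighborSet a) (hta : t ≠ a)
    (hz : G.neighborSet z ⊆ G.neighborSet t ∪ {a})
    (ht : {b, p} ⊆ G.neighborSet t \ G.neighborSet z) (hbp : b ≠ p)
    {x : V → ℝ} {q : ℝ} (hpos : ∀ v, 0 < x v) (heig : signlessLaplacian G *ᵥ x = q • x) :
    x a < x b := by
  classical
  have hba : G.Adj b a := (hb (by simp)).1
  have htp : G.Adj t p := (ht (by simp)).1
  have hzb : z ≠ b := by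
    rintro rfl
    exact (hz (hb (Set.mem_insert t {a})).1).elim (G.loopless.irrefl t) hta
  have hzA : G.neighborSet z ⊆ G.neighborSet t ∪ ({a} : Finset V) := by simpa using hz
  have htB : (({b, p} : Finset V) : Set V) ⊆ G.neighborSet t \ G.neighborSet z := by simpa using ht
  have hab_le : (q - G.degree a) * (x a - x b) ≤ x z + x b - (x t + x a) := by
    simpa [Finset.sum_pair, hzb, hta] using
      sub_degree_mul_sub_le_of_signlessLaplacian_mulVec_eq heig (fun v => (hpos v).le)
        (A := {z, b}) (B := {t, a}) (by simpa using ha) (by simpa using hb) (by simp [hzb, hta])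
  have hzt_le : (q - G.degree z) * (x z - x t) ≤ x a - (x b + x p) := by
    simpa [Finset.sum_pair, hbp] using
      sub_degree_mul_sub_le_of_signlessLaplacian_mulVec_eq heig (fun v => (hpos v).le)
        hzA htB (by simp [hbp])
  have hqa : (G.degree a : ℝ) < q := degree_lt_of_signlessLaplacian_mulVec_eq heig hpos hba.symm
  have hqz : (G.degree z : ℝ) + 1 < q := by
    have hdeg : G.degree z + 2 ≤ G.degree t + 1 := by
      simpa [hbp] using degree_add_card_le_degree_add_card hzA htB
    calc (G.degree z : ℝ) + 1 ≤ G.degree t := by exact_mod_cast (by omega)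
      _ < q := degree_lt_of_signlessLaplacian_mulVec_eq heig hpos htp
  by_contra! hle
  have hab_le_zt : x a - x b ≤ x z - x t := by
    linarith [mul_nonneg (sub_nonneg.mpr hqa.le) (sub_nonneg.mpr hle)]
  have hzt_le_mul : x z - x t ≤ (q - G.degree z) * (x z - x t) :=
    le_mul_of_one_le_left (by linarith) (by linarith)
  linarith [hpos p]

/-- for the maximal outer-planar graph of type `D_2` with `Δ = n - 3`,
the Perron eigenvector satisfies `x_k > x_{n-1}`. -/
theorem stmt_14 (n k : ℕ) (hn : 8 ≤ n) (hk1 : 4 ≤ k) (hk2 : k ≤ n - 3)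
    (G : SimpleGraph (Fin n))
    (h0 : G.neighborSet ⟨0, by omega⟩ = {⟨1, by omega⟩, ⟨n - 1, by omega⟩})
    (h1 : G.neighborSet ⟨1, by omega⟩ =
      {⟨0, by omega⟩, ⟨2, by omega⟩, ⟨3, by omega⟩, ⟨k, by omega⟩, ⟨n - 1, by omega⟩})
    (h2 : G.neighborSet ⟨2, by omega⟩ = {⟨1, by omega⟩, ⟨3, by omega⟩})
    (hlast : G.neighborSet ⟨n - 1, by omega⟩ =
      {⟨0, by omega⟩, ⟨1, by omega⟩, ⟨k, by omega⟩, ⟨n - 2, by omega⟩})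
    (hk' : G.neighborSet ⟨k, by omega⟩ =
      insert ⟨1, by omega⟩ {u : Fin n | 3 ≤ u.val ∧ u ≠ ⟨k, by omega⟩})
    (x : Fin n → ℝ) (hpos : ∀ i, 0 < x i)
    (heig : (signlessLaplacian G).mulVec x = qIndex G • x) :
    x ⟨n - 1, by omega⟩ < x ⟨k, by omega⟩ := by
  have h31 : G.Adj ⟨3, by omega⟩ ⟨1, by omega⟩ := SimpleGraph.Adj.symm (h1.ge (by simp))
  have h32 : G.Adj ⟨3, by omega⟩ ⟨2, by omega⟩ := SimpleGraph.Adj.symm (h2.ge (by simp))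
  have h3k : G.Adj ⟨3, by omega⟩ ⟨k, by omega⟩ :=
    SimpleGraph.Adj.symm (hk'.ge (.inr ⟨le_rfl, Fin.ne_of_val_ne (by dsimp only; omega)⟩))
  refine stmt_14_general G (z := ⟨0, by omega⟩) (t := ⟨3, by omega⟩) (p := ⟨2, by omega⟩)
    ?_ ?_ (Fin.ne_of_val_ne (by dsimp only; omega)) ?_ ?_
    (Fin.ne_of_val_ne (by dsimp only; omega)) hpos heig
  · simp only [hlast, hk', Set.subset_def, Set.mem_union, Set.mem_insert_iff,
      Set.mem_singleton_iff, Set.mem_ofPred_eq, ne_eq, Fin.ext_iff]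
    omega
  · simp only [hlast, hk', Set.subset_def, Set.mem_sdiff, Set.mem_insert_iff,
      Set.mem_singleton_iff, Set.mem_ofPred_eq, ne_eq, Fin.ext_iff]
    omega
  · simp [h0, Set.insert_subset_iff, h31]
  · simp only [h0, Set.insert_subset_iff, Set.singleton_subset_iff, Set.mem_sdiff,
      SimpleGraph.mem_neighborSet, h3k, h32, true_and, Set.mem_insert_iff, Set.mem_singleton_iff,
      Fin.ext_iff]
    omega
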